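/- Let (Q, 𝔫, k) be a commutative Noetherian local ring and I ⊆ Q a grade 3 perfect ideal of resolution format (1, m, m+n−1, n). If m ≥ 4, then there exists a grade 3 perfect ideal of resolution format (1, m+1, m+n+1, n+1) that is linked to I. -/

import Mathlib

/-- An ideal `I` in a commutative Noetherian local ring `Q` has **resolution format**
`(1, m, m+n-1, n)` if the minimal free resolution of `Q/I` over `Q` is
`0 → Q^n → Q^{m+n-1} → Q^m → Q`, i.e. there is an exact complex of free modules of the
indicated ranks augmented by `Q → Q/I → 0`, which is minimal in the sense that each
differential maps into `𝔫` times the target (`𝔫` the maximal ideal).  Equivalently, the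
`i`-th entry of the format is the Betti number `dim_k Tor_i^Q(Q/I, k)`. -/
def HasResolutionFormat {Q : Type*} [CommRing Q] [IsLocalRing Q]
    (I : Ideal Q) (m n : ℕ) : Prop :=
  ∃ (d1 : (Fin m → Q) →ₗ[Q] Q)
    (d2 : (Fin (m + n - 1) → Q) →ₗ[Q] (Fin m → Q))
    (d3 : (Fin n → Q) →ₗ[Q] (Fin (m + n - 1) → Q)),
    LinearMap.range d1 = I ∧
    LinearMap.range d2 = LinearMap.ker d1 ∧
    LinearMap.range d3 = LinearMap.ker d2 ∧
    LinearMap.ker d3 = ⊥ ∧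
    I ≤ IsLocalRing.maximalIdeal Q ∧
    LinearMap.range d2 ≤ (IsLocalRing.maximalIdeal Q) • (⊤ : Submodule Q (Fin m → Q)) ∧
    LinearMap.range d3 ≤ (IsLocalRing.maximalIdeal Q) • (⊤ : Submodule Q (Fin (m + n - 1) → Q))

/-- `I` is a grade `3` perfect ideal of resolution format `(1, m, m+n-1, n)`:
`I` contains a `Q`-regular sequence of length `3`, one has `m ≥ 3` and `n ≥ 1`, and the
minimal free resolution of `Q/I` has the format `(1, m, m+n-1, n)` (in particular `Q/I`
has projective dimension `3` as a `Q`-module, since `n ≥ 1`). -/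
def IsGrade3PerfectOfFormat {Q : Type*} [CommRing Q] [IsLocalRing Q]
    (I : Ideal Q) (m n : ℕ) : Prop :=
  (∃ x y z : Q, x ∈ I ∧ y ∈ I ∧ z ∈ I ∧ RingTheory.Sequence.IsRegular Q [x, y, z]) ∧
  3 ≤ m ∧ 1 ≤ n ∧ HasResolutionFormat I m n

/-- `J` is **directly linked** to `I` if there is a `Q`-regular sequence `x₁, x₂, x₃` of
elements of `I` with `J = (x₁, x₂, x₃) : I`. -/
def DirectlyLinked {Q : Type*} [CommRing Q] (I J : Ideal Q) : Prop :=
  ∃ x y z : Q, x ∈ I ∧ y ∈ I ∧ z ∈ I ∧ RingTheory.Sequence.IsRegular Q [x, y, z] ∧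
    J = Submodule.colon (Ideal.span {x, y, z}) I

/-- `J` is **linked** to `I` if there is a finite chain of ideals
`I = J₀, J₁, …, J_r = J` in which `J_{i+1}` is directly linked to `J_i` for every `i`. -/
def Linked {Q : Type*} [CommRing Q] (I J : Ideal Q) : Prop :=
  Relation.ReflTransGen (fun A B => DirectlyLinked A B) I J

/-- `I` is **licci** if it is linked to an ideal generated by a `Q`-regular sequence of
length `3`, i.e. `I` is in the linkage class of a complete intersection ideal. -/
def Licci {Q : Type*} [CommRing Q] (I : Ideal Q) : Prop :=
  ∃ C : Ideal Q, Linked I C ∧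
    ∃ x y z : Q, RingTheory.Sequence.IsRegular Q [x, y, z] ∧ C = Ideal.span {x, y, z}

/-!
Choose a regular sequence `x, y, z` in `I` with `x` a minimal generator of `I` and `y ∈ 𝔪I`. Linking
`I` by `(x, y, z)` and the result by `(x, y, z²)` yields the basic double link `(x, y) + zI`; this
rests on the duality `K : (K : I) = I` for `K = (x, y, z)`. By dimension shifting along `x, y, z`,
`Ext^1(R/I, R)` and `Ext^2(R/I, R)` vanish and every `r ∈ K : (K : I)` annihilates `Ext^3(R/I, R)`.
Hence `r` is null-homotopic on the resolution of `R/I`, which puts `r` into `I`.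

A resolution of `(x, y) + zI` is assembled from the one of `I` and the Koszul relation of `x, y`.
Since `x` splits off the first module of the resolution and `y ∈ 𝔪I`, it is again minimal, with one
more generator and one more last syzygy.
-/

open IsLocalRing RingTheory.Sequence
open scoped Pointwise

section RegularSequences

variable {R : Type*} [CommRing R] {x y z : R}

lemma isWeaklyRegular_triple_iff : IsWeaklyRegular R [x, y, z] ↔
    IsWeaklyRegular R [x, y] ∧ IsSMulRegular (R ⧸ Ideal.span {x, y}) z := by
  have hofList : (Ideal.ofList [x, y] • ⊤ : Ideal R) = Ideal.span {x, y} := by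
    simp [Ideal.span_insert]
  rw [← isWeaklyRegular_singleton_iff, ← hofList]
  exact isWeaklyRegular_append_iff R [x, y] [z]

lemma isRegular_triple_mul_self (h : IsRegular R [x, y, z]) : IsRegular R [x, y, z * z] := by
  obtain ⟨hxy, hz⟩ := isWeaklyRegular_triple_iff.mp h.toIsWeaklyRegular
  refine ⟨isWeaklyRegular_triple_iff.mpr ⟨hxy, hz.mul hz⟩, fun htop => h.top_ne_smul ?_⟩
  refine (top_le_iff.mp (htop.le.trans (Submodule.smul_mono_left ?_))).symm
  refine Ideal.span_le.mpr fun r hr => ?_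
  obtain rfl | rfl | rfl : r = x ∨ r = y ∨ r = z * z := by simpa using hr
  · exact Ideal.subset_span (by simp)
  · exact Ideal.subset_span (by simp)
  · exact Ideal.mul_mem_left _ _ (Ideal.subset_span (by simp))

lemma span_triple_eq (x y z : R) : Ideal.span {x, y, z} = Ideal.span {z} ⊔ Ideal.span {x, y} := by
  simp only [Ideal.span_insert]
  ac_rfl

lemma exists_eq_mul_of_mul_add_mul_eq_zero (hxy : IsWeaklyRegular R [x, y])
    {p q : R} (h : x * p + y * q = 0) : ∃ c, p = -y * c ∧ q = x * c := by
  simp only [isWeaklyRegular_cons_iff, IsWeaklyRegular.nil, and_true] at hxy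
  obtain ⟨hx, hy⟩ := hxy
  have hq : q ∈ x • (⊤ : Submodule R R) := mem_of_isSMulRegular_quotient_of_smul_mem hy <| by
    have : y • q = x • -p := by simp only [smul_eq_mul]; linear_combination h
    rw [this]
    exact Submodule.smul_mem_pointwise_smul _ _ _ trivial
  obtain ⟨c, -, rfl⟩ := (Submodule.mem_smul_pointwise_iff_exists _ _ _).mp hq
  refine ⟨c, hx ?_, rfl⟩
  simp only [smul_eq_mul] at h ⊢
  linear_combination h

lemma exists_notMem_smul_isSMulRegular [IsNoetherianRing R] [IsLocalRing R] {I : Ideal R}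
    (hI : I ≠ ⊥) {M : Type*} [AddCommGroup M] [Module R M] [Module.Finite R M] {t : R}
    (ht : t ∈ I) (htM : IsSMulRegular M t) :
    ∃ x ∈ I, x ∉ maximalIdeal R • I ∧ IsSMulRegular M x := by
  have hI𝔪 : ¬ I ≤ maximalIdeal R • I := fun hle => hI <|
    Submodule.eq_bot_of_le_smul_of_le_jacobson_bot _ I (IsNoetherian.noetherian I) hle
      (maximalIdeal_le_jacobson _)
  have regular_iff (r : R) : IsSMulRegular M r ↔ r ∉ ⋃ p ∈ associatedPrimes R M, (p : Set R) := by
    rw [biUnion_associatedPrimes_eq_compl_regular, Set.notMem_compl_iff]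
    rfl
  by_contra! hcon
  have hcover : (I : Set R) ⊆
      ⋃ p ∈ insert (maximalIdeal R • I) (associatedPrimes R M), (id p : Ideal R) := fun r hr => by
    rw [Set.biUnion_insert, Set.mem_union, or_iff_not_imp_left]
    exact fun hr' => not_not.mp ((regular_iff r).not.mp (hcon r hr hr'))
  have hprime : ∀ p ∈ insert (maximalIdeal R • I) (associatedPrimes R M),
      p ≠ maximalIdeal R • I → p ≠ maximalIdeal R • I → (id p).IsPrime :=
    fun p hp hne _ => (hp.resolve_left hne).isPrime
  obtain ⟨p, rfl | hp, hIp⟩ := (Ideal.subset_union_prime_finite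
    ((associatedPrimes.finite R M).insert _) _ _ hprime).mp hcover
  · exact hI𝔪 hIp
  · exact (regular_iff t).mp htM (Set.mem_biUnion hp (hIp ht))

theorem exists_isRegular_notMem_smul [IsNoetherianRing R] [IsLocalRing R] {I : Ideal R}
    (hI : I ≤ maximalIdeal R) (hx : x ∈ I) (hy : y ∈ I) (hz : z ∈ I)
    (h : IsWeaklyRegular R [x, y, z]) :
    ∃ x' ∈ I, ∃ y' ∈ maximalIdeal R • I, ∃ z' ∈ I,
      x' ∉ maximalIdeal R • I ∧ IsRegular R [x', y', z'] := by
  have mem_maximalIdeal_of_mem {a b c : R} (ha : a ∈ I) (hb : b ∈ I) (hc : c ∈ I) :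
      ∀ r ∈ [a, b, c], r ∈ maximalIdeal R := by
    simp only [List.forall_mem_cons]
    exact ⟨hI ha, hI hb, hI hc, fun _ h => absurd h List.not_mem_nil⟩
  have hI0 : I ≠ ⊥ := by
    rintro rfl
    obtain rfl : x = 0 := hx
    exact one_ne_zero
      (((isWeaklyRegular_cons_iff R _ _).mp h).1.right_eq_zero_of_smul (zero_mul (1 : R)))
  have hyy : y * y ∈ I := Ideal.mul_mem_left I y hy
  have hxzy : IsWeaklyRegular R [x, z, y] := isWeaklyRegular_of_perm_of_subset_maximalIdeal h
    ((List.Perm.swap z y []).cons x) (mem_maximalIdeal_of_mem hx hy hz)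
  obtain ⟨hxz, hyreg⟩ := isWeaklyRegular_triple_iff.mp hxzy
  have hxyyz : IsWeaklyRegular R [x, y * y, z] := isWeaklyRegular_of_perm_of_subset_maximalIdeal
    (isWeaklyRegular_triple_iff.mpr ⟨hxz, hyreg.mul hyreg⟩) ((List.Perm.swap _ _ []).cons x)
    (mem_maximalIdeal_of_mem hx hz hyy)
  obtain ⟨hxyy, hzreg⟩ := isWeaklyRegular_triple_iff.mp hxyyz
  obtain ⟨t, ht, ht', htreg⟩ := exists_notMem_smul_isSMulRegular hI0 hz hzreg
  have htyx : IsWeaklyRegular R [t, y * y, x] := isWeaklyRegular_of_perm_of_subset_maximalIdeal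
    (isWeaklyRegular_triple_iff.mpr ⟨hxyy, htreg⟩) (List.reverse_perm [t, y * y, x])
    (mem_maximalIdeal_of_mem hx hyy ht)
  exact ⟨t, ht, y * y, Ideal.mul_mem_mul (hI hy) hy, x, hx, ht',
    .of_isWeaklyRegular_of_mem_maximalIdeal R (mem_maximalIdeal_of_mem ht hyy hx) htyx⟩

end RegularSequences

section HomCohomology

variable {R : Type*} [CommRing R]
variable {E F G H : Type*} [AddCommGroup E] [Module R E] [AddCommGroup F] [Module R F]
  [AddCommGroup G] [Module R G] [AddCommGroup H] [Module R H]

/-- Multiplication by `r` annihilates the cohomology at `Hom(F, M)` of the complex obtained by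
applying `Hom(-, M)` to `G → F → E`. A complex ending at `F` is encoded by `G = PUnit` or
`E = PUnit`. -/
def AnnihilatesHomCohomology (r : R) (d : F →ₗ[R] E) (d' : G →ₗ[R] F) (M : Type*)
    [AddCommGroup M] [Module R M] : Prop :=
  ∀ c : F →ₗ[R] M, c ∘ₗ d' = 0 → ∃ e : E →ₗ[R] M, e ∘ₗ d = r • c

variable {M : Type*} [AddCommGroup M] [Module R M] {r : R} {d : F →ₗ[R] E} {d' : G →ₗ[R] F}

lemma exists_smul_eq_of_mkQ_comp_eq_zero [Module.Projective R F] {f : R} {b : F →ₗ[R] M}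
    (hb : (f • (⊤ : Submodule R M)).mkQ ∘ₗ b = 0) : ∃ g : F →ₗ[R] M, f • g = b := by
  have hrange (v : F) : b v ∈ LinearMap.range (LinearMap.lsmul R M f) := by
    have hv : b v ∈ f • (⊤ : Submodule R M) := by
      simpa using LinearMap.congr_fun hb v
    obtain ⟨w, -, hw⟩ := (Submodule.mem_smul_pointwise_iff_exists _ _ _).mp hv
    exact ⟨w, hw⟩
  obtain ⟨g, hg⟩ := Module.projective_lifting_property (LinearMap.lsmul R M f).rangeRestrict
    (b.codRestrict _ hrange) (LinearMap.surjective_rangeRestrict _)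
  exact ⟨g, LinearMap.ext fun v => congrArg Subtype.val (LinearMap.congr_fun hg v)⟩

/-- Dimension shifting: as `f` is null-homotopic, `f • c` is the coboundary of `c ∘ₗ s`, which is a
cocycle modulo `f`; lifting what makes `r • (c ∘ₗ s)` a coboundary there and dividing by `f` gives
`r • c`. -/
theorem AnnihilatesHomCohomology.of_quotSMulTop [Module.Projective R E] [Module.Projective R F]
    {f : R} {d'' : H →ₗ[R] G} {s : F →ₗ[R] G} {s' : G →ₗ[R] H} (hdd' : d ∘ₗ d' = 0)
    (hs : s ∘ₗ d' + d'' ∘ₗ s' = f • .id) (hf : IsSMulRegular M f)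
    (h : AnnihilatesHomCohomology r d d' (QuotSMulTop f M)) :
    AnnihilatesHomCohomology r d' d'' M := by
  intro c hc
  let q : M →ₗ[R] QuotSMulTop f M := (f • (⊤ : Submodule R M)).mkQ
  have hcs : (c ∘ₗ s) ∘ₗ d' = f • c := by
    rw [LinearMap.comp_assoc, eq_sub_of_add_eq hs, LinearMap.comp_sub, ← LinearMap.comp_assoc, hc,
      LinearMap.zero_comp, sub_zero, LinearMap.comp_smul, LinearMap.comp_id]
  have hfq (g : G →ₗ[R] M) : q ∘ₗ (f • g) = 0 := by
    ext v
    exact (Submodule.Quotient.mk_eq_zero _).mpr (Submodule.smul_mem_pointwise_smul _ f ⊤ trivial)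
  obtain ⟨e', he'⟩ := h (q ∘ₗ c ∘ₗ s) (by rw [LinearMap.comp_assoc, hcs, hfq])
  obtain ⟨e, rfl⟩ := Module.projective_lifting_property q e' (Submodule.mkQ_surjective _)
  obtain ⟨g, hg⟩ := exists_smul_eq_of_mkQ_comp_eq_zero (f := f) (b := r • (c ∘ₗ s) - e ∘ₗ d) (by
    rw [LinearMap.comp_sub, LinearMap.comp_smul, ← he', LinearMap.comp_assoc, sub_self])
  refine ⟨g, LinearMap.ext fun v => hf ?_⟩
  calc f • g (d' v) = (r • (c ∘ₗ s) - e ∘ₗ d) (d' v) := by rw [← hg]; rfl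
    _ = r • ((c ∘ₗ s) ∘ₗ d') v - e ((d ∘ₗ d') v) := rfl
    _ = f • (r • c) v := by
      rw [hcs, hdd', LinearMap.zero_apply, map_zero, sub_zero, LinearMap.smul_apply,
        LinearMap.smul_apply, smul_comm]

theorem AnnihilatesHomCohomology.of_free [Module.Free R M] [Module.Finite R M]
    (h : AnnihilatesHomCohomology r d d' R) : AnnihilatesHomCohomology r d d' M := by
  intro c hc
  let B := Module.Free.chooseBasis R M
  choose e he using fun i =>
    h (B.coord i ∘ₗ c) (by rw [LinearMap.comp_assoc, hc, LinearMap.comp_zero])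
  refine ⟨B.equivFun.symm.toLinearMap ∘ₗ LinearMap.pi e, LinearMap.ext fun v => ?_⟩
  refine B.equivFun.symm_apply_eq.mpr (funext fun i => ?_)
  simpa using LinearMap.congr_fun (he i) v

lemma annihilatesHomCohomology_zero {d₁ : G →ₗ[R] R}
    (h : ∀ v : M, (∀ i ∈ LinearMap.range d₁, i • v = 0) → r • v = 0) :
    AnnihilatesHomCohomology r (0 : R →ₗ[R] PUnit) d₁ M := by
  intro c hc
  have hc1 : r • c 1 = 0 := h (c 1) <| by
    rintro _ ⟨v, rfl⟩
    simpa [← map_smul] using LinearMap.congr_fun hc v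
  exact ⟨0, LinearMap.ext_ring hc1.symm⟩

lemma annihilatesHomCohomology_zero_of_isSMulRegular {d₁ : G →ₗ[R] R} {f : R}
    (hf : IsSMulRegular M f) (hfd : f ∈ LinearMap.range d₁) :
    AnnihilatesHomCohomology r (0 : R →ₗ[R] PUnit) d₁ M :=
  annihilatesHomCohomology_zero fun v hv => by
    rw [hf.right_eq_zero_of_smul (hv f hfd), smul_zero]

end HomCohomology

section Resolution

variable {R : Type*} [CommRing R]
variable {F₁ F₂ F₃ : Type*} [AddCommGroup F₁] [Module R F₁] [AddCommGroup F₂] [Module R F₂]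
  [AddCommGroup F₃] [Module R F₃]

lemma exists_comp_eq_of_exact {E F G P : Type*} [AddCommGroup E] [Module R E] [AddCommGroup F]
    [Module R F] [AddCommGroup G] [Module R G] [AddCommGroup P] [Module R P]
    [Module.Projective R P] {d : F →ₗ[R] E} {d' : G →ₗ[R] F} (h : Function.Exact d' d)
    {g : P →ₗ[R] F} (hg : d ∘ₗ g = 0) : ∃ s : P →ₗ[R] G, d' ∘ₗ s = g := by
  have hrange (v : P) : g v ∈ LinearMap.range d' := (h (g v)).mp (LinearMap.congr_fun hg v)
  obtain ⟨s, hs⟩ := Module.projective_lifting_property d'.rangeRestrict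
    (g.codRestrict _ hrange) d'.surjective_rangeRestrict
  exact ⟨s, LinearMap.ext fun v => congrArg Subtype.val (LinearMap.congr_fun hs v)⟩

/-- `0 → F₃ → F₂ → F₁ → R` is exact, that is, it is a resolution of length three of
`R ⧸ LinearMap.range d₁`. -/
structure IsResolution (d₁ : F₁ →ₗ[R] R) (d₂ : F₂ →ₗ[R] F₁) (d₃ : F₃ →ₗ[R] F₂) : Prop where
  exact₁ : Function.Exact d₂ d₁
  exact₂ : Function.Exact d₃ d₂
  injective : Function.Injective d₃

namespace IsResolution

variable {d₁ : F₁ →ₗ[R] R} {d₂ : F₂ →ₗ[R] F₁} {d₃ : F₃ →ₗ[R] F₂}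

lemma comp₁ (h : IsResolution d₁ d₂ d₃) : d₁ ∘ₗ d₂ = 0 := h.exact₁.linearMap_comp_eq_zero

lemma comp₂ (h : IsResolution d₁ d₂ d₃) : d₂ ∘ₗ d₃ = 0 := h.exact₂.linearMap_comp_eq_zero

lemma congr {E₁ E₂ E₃ : Type*} [AddCommGroup E₁] [Module R E₁] [AddCommGroup E₂] [Module R E₂]
    [AddCommGroup E₃] [Module R E₃] (h : IsResolution d₁ d₂ d₃) (e₁ : F₁ ≃ₗ[R] E₁)
    (e₂ : F₂ ≃ₗ[R] E₂) (e₃ : F₃ ≃ₗ[R] E₃) :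
    IsResolution (d₁ ∘ₗ e₁.symm.toLinearMap) (e₁.toLinearMap ∘ₗ d₂ ∘ₗ e₂.symm.toLinearMap)
      (e₂.toLinearMap ∘ₗ d₃ ∘ₗ e₃.symm.toLinearMap) where
  exact₁ := .of_ladder_linearEquiv_of_exact (e₁ := e₂) (e₂ := e₁) (e₃ := .refl R R)
    (by ext; simp) (by ext; simp) h.exact₁
  exact₂ := .of_ladder_linearEquiv_of_exact (e₁ := e₃) (e₂ := e₂) (e₃ := e₁)
    (by ext; simp) (by ext; simp) h.exact₂
  injective := e₂.injective.comp (h.injective.comp e₃.symm.injective)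

variable [Module.Projective R F₁] [Module.Projective R F₂]

theorem exists_homotopy (h : IsResolution d₁ d₂ d₃) (a : F₁) :
    ∃ (s₁ : F₁ →ₗ[R] F₂) (s₂ : F₂ →ₗ[R] F₃),
      LinearMap.toSpanSingleton R F₁ a ∘ₗ d₁ + d₂ ∘ₗ s₁ = d₁ a • .id ∧
      s₁ ∘ₗ d₂ + d₃ ∘ₗ s₂ = d₁ a • .id ∧ s₂ ∘ₗ d₃ = d₁ a • .id := by
  have hd₁₂ (v) : d₁ (d₂ v) = 0 := LinearMap.congr_fun h.comp₁ v
  have hd₂₃ (v) : d₂ (d₃ v) = 0 := LinearMap.congr_fun h.comp₂ v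
  obtain ⟨s₁, hs₁⟩ := exists_comp_eq_of_exact h.exact₁
    (g := d₁ a • .id - LinearMap.toSpanSingleton R F₁ a ∘ₗ d₁) (by ext v; simp [mul_comm])
  have hs₁' (v) : d₂ (s₁ v) = d₁ a • v - d₁ v • a := LinearMap.congr_fun hs₁ v
  obtain ⟨s₂, hs₂⟩ := exists_comp_eq_of_exact h.exact₂ (g := d₁ a • .id - s₁ ∘ₗ d₂)
    (by ext v; simp [hs₁', hd₁₂])
  have hs₂' (v) : d₃ (s₂ v) = d₁ a • v - s₁ (d₂ v) := LinearMap.congr_fun hs₂ v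
  refine ⟨s₁, s₂, by rw [hs₁]; abel, by rw [hs₂]; abel, LinearMap.ext fun v => h.injective ?_⟩
  simp [hs₂', hd₂₃]

variable {M : Type*} [AddCommGroup M] [Module R M] {r f : R}

lemma annihilatesHomCohomology_one (h : IsResolution d₁ d₂ d₃) (hf : IsSMulRegular M f)
    (hfd : f ∈ LinearMap.range d₁)
    (h₀ : AnnihilatesHomCohomology r (0 : R →ₗ[R] PUnit) d₁ (QuotSMulTop f M)) :
    AnnihilatesHomCohomology r d₁ d₂ M := by
  obtain ⟨a, rfl⟩ := hfd
  obtain ⟨s₁, s₂, hs, -, -⟩ := h.exists_homotopy a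
  exact h₀.of_quotSMulTop (LinearMap.zero_comp _) hs hf

lemma annihilatesHomCohomology_two (h : IsResolution d₁ d₂ d₃) (hf : IsSMulRegular M f)
    (hfd : f ∈ LinearMap.range d₁)
    (h₁ : AnnihilatesHomCohomology r d₁ d₂ (QuotSMulTop f M)) :
    AnnihilatesHomCohomology r d₂ d₃ M := by
  obtain ⟨a, rfl⟩ := hfd
  obtain ⟨s₁, s₂, -, hs, -⟩ := h.exists_homotopy a
  exact h₁.of_quotSMulTop h.comp₁ hs hf

lemma annihilatesHomCohomology_three (h : IsResolution d₁ d₂ d₃) (hf : IsSMulRegular M f)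
    (hfd : f ∈ LinearMap.range d₁)
    (h₂ : AnnihilatesHomCohomology r d₂ d₃ (QuotSMulTop f M)) :
    AnnihilatesHomCohomology r d₃ (0 : PUnit →ₗ[R] F₃) M := by
  obtain ⟨a, rfl⟩ := hfd
  obtain ⟨s₁, s₂, -, -, hs⟩ := h.exists_homotopy a
  exact h₂.of_quotSMulTop (s' := 0) h.comp₂ (by rw [hs, LinearMap.zero_comp, add_zero]) hf

end IsResolution

end Resolution

section MinimalResolution

variable {R : Type*} [CommRing R] {M N : Type*} [AddCommGroup M] [Module R M] [AddCommGroup N]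
  [Module R N] {𝔪 : Ideal R}

lemma map_mem_smul_top (f : M →ₗ[R] N) {v : M} (hv : v ∈ 𝔪 • (⊤ : Submodule R M)) :
    f v ∈ 𝔪 • (⊤ : Submodule R N) :=
  Submodule.smul_top_le_comap_smul_top 𝔪 f hv

lemma prodMk_mem_smul_top {v : M} {u : N} (hv : v ∈ 𝔪 • (⊤ : Submodule R M))
    (hu : u ∈ 𝔪 • (⊤ : Submodule R N)) : (v, u) ∈ 𝔪 • (⊤ : Submodule R (M × N)) := by
  simpa using add_mem (map_mem_smul_top (LinearMap.inl R M N) hv)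
    (map_mem_smul_top (LinearMap.inr R M N) hu)

lemma mem_smul_top_self {r : R} (hr : r ∈ 𝔪) : r ∈ 𝔪 • (⊤ : Ideal R) := by
  rwa [smul_eq_mul, Ideal.mul_top]

variable {F₁ F₂ F₃ : Type*} [AddCommGroup F₁] [Module R F₁] [AddCommGroup F₂] [Module R F₂]
  [AddCommGroup F₃] [Module R F₃]

/-- A resolution of length three whose differentials vanish modulo `𝔪`; over a local ring with
maximal ideal `𝔪` this is minimality. -/
structure IsMinimalResolution (𝔪 : Ideal R) (d₁ : F₁ →ₗ[R] R) (d₂ : F₂ →ₗ[R] F₁)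
    (d₃ : F₃ →ₗ[R] F₂) : Prop extends IsResolution d₁ d₂ d₃ where
  apply_mem₁ (v : F₁) : d₁ v ∈ 𝔪
  apply_mem₂ (v : F₂) : d₂ v ∈ 𝔪 • (⊤ : Submodule R F₁)
  apply_mem₃ (v : F₃) : d₃ v ∈ 𝔪 • (⊤ : Submodule R F₂)

lemma IsMinimalResolution.congr {d₁ : F₁ →ₗ[R] R} {d₂ : F₂ →ₗ[R] F₁}
    {d₃ : F₃ →ₗ[R] F₂} {E₁ E₂ E₃ : Type*} [AddCommGroup E₁] [Module R E₁] [AddCommGroup E₂]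
    [Module R E₂] [AddCommGroup E₃] [Module R E₃]
    (h : IsMinimalResolution 𝔪 d₁ d₂ d₃) (e₁ : F₁ ≃ₗ[R] E₁) (e₂ : F₂ ≃ₗ[R] E₂)
    (e₃ : F₃ ≃ₗ[R] E₃) :
    IsMinimalResolution 𝔪 (d₁ ∘ₗ e₁.symm.toLinearMap)
      (e₁.toLinearMap ∘ₗ d₂ ∘ₗ e₂.symm.toLinearMap)
      (e₂.toLinearMap ∘ₗ d₃ ∘ₗ e₃.symm.toLinearMap) where
  toIsResolution := h.toIsResolution.congr e₁ e₂ e₃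
  apply_mem₁ _ := h.apply_mem₁ _
  apply_mem₂ _ := map_mem_smul_top e₁.toLinearMap (h.apply_mem₂ _)
  apply_mem₃ _ := map_mem_smul_top e₂.toLinearMap (h.apply_mem₃ _)

end MinimalResolution

section DoubleColon

variable {R : Type*} [CommRing R]

/-- The quotient by `(x, y, z)`, reduced modulo one element at a time. -/
noncomputable def quotSpanTripleEquiv (x y z : R) :
    (R ⧸ Ideal.span {x, y, z}) ≃ₗ[R] QuotSMulTop z (QuotSMulTop y (QuotSMulTop x R)) :=
  Submodule.quotEquivOfEq _ _ (by simp [Ideal.span_insert]) ≪≫ₗ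
    Submodule.quotOfListConsSMulTopEquivQuotSMulTopInner R x [y, z] ≪≫ₗ
    Submodule.quotOfListConsSMulTopEquivQuotSMulTopInner _ y [z] ≪≫ₗ
    Submodule.quotEquivOfEq _ _ (by simp [Submodule.ideal_span_singleton_smul])

lemma smul_eq_zero_of_mem_colon_colon {I K : Ideal R} {r : R}
    (hr : r ∈ K.colon (K.colon (I : Set R) : Set R)) {M : Type*} [AddCommGroup M] [Module R M]
    (e : (R ⧸ K) ≃ₗ[R] M) (v : M) (hv : ∀ i ∈ I, i • v = 0) : r • v = 0 := by
  obtain ⟨v, rfl⟩ := e.surjective v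
  obtain ⟨c, rfl⟩ := Ideal.Quotient.mk_surjective v
  have smul_mk (s : R) : s • e (Ideal.Quotient.mk K c) = 0 ↔ s * c ∈ K := by
    rw [← map_smul, e.map_eq_zero_iff]
    exact Ideal.Quotient.eq_zero_iff_mem
  refine (smul_mk r).mpr (Submodule.mem_colon.mp hr c (Submodule.mem_colon.mpr fun i hi => ?_))
  simpa only [smul_eq_mul, mul_comm] using (smul_mk i).mp (hv i hi)

variable {F₁ F₂ F₃ : Type*} [AddCommGroup F₁] [Module R F₁] [AddCommGroup F₂] [Module R F₂]
  [AddCommGroup F₃] [Module R F₃]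
  {d₁ : F₁ →ₗ[R] R} {d₂ : F₂ →ₗ[R] F₁} {d₃ : F₃ →ₗ[R] F₂} {x y z : R}

namespace IsResolution

section Lift

variable [Module.Projective R F₁] [Module.Projective R F₂]

lemma exists_comp_d₃_eq_smul_id [Module.Free R F₃] [Module.Finite R F₃]
    (h : IsResolution d₁ d₂ d₃) (hxyz : IsWeaklyRegular R [x, y, z])
    (hx : x ∈ LinearMap.range d₁) (hy : y ∈ LinearMap.range d₁) (hz : z ∈ LinearMap.range d₁)
    {r : R} (hr : r ∈ (Ideal.span {x, y, z}).colon
      ((Ideal.span {x, y, z}).colon (LinearMap.range d₁ : Set R) : Set R)) :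
    ∃ e : F₂ →ₗ[R] F₃, e ∘ₗ d₃ = r • .id := by
  simp only [isWeaklyRegular_cons_iff, IsWeaklyRegular.nil, and_true] at hxyz
  obtain ⟨hxR, hyR, hzR⟩ := hxyz
  have h₀ := annihilatesHomCohomology_zero (d₁ := d₁)
    (smul_eq_zero_of_mem_colon_colon hr (quotSpanTripleEquiv x y z))
  have h₁ := h.annihilatesHomCohomology_one hzR hz h₀
  have h₂ := h.annihilatesHomCohomology_two hyR hy h₁
  have h₃ := h.annihilatesHomCohomology_three hxR hx h₂
  exact h₃.of_free .id (LinearMap.comp_zero _)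

variable {M : Type*} [AddCommGroup M] [Module R M] [Module.Free R M] [Module.Finite R M]

lemma exists_comp_d₁_eq (h : IsResolution d₁ d₂ d₃) (hxy : IsWeaklyRegular R [x, y])
    (hx : x ∈ LinearMap.range d₁) (hy : y ∈ LinearMap.range d₁) {c : F₁ →ₗ[R] M}
    (hc : c ∘ₗ d₂ = 0) : ∃ e : R →ₗ[R] M, e ∘ₗ d₁ = c := by
  simp only [isWeaklyRegular_cons_iff, IsWeaklyRegular.nil, and_true] at hxy
  obtain ⟨hxR, hyR⟩ := hxy
  have h₀ := annihilatesHomCohomology_zero_of_isSMulRegular (r := 1) hyR hy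
  have h₁ := h.annihilatesHomCohomology_one hxR hx h₀
  simpa only [one_smul] using h₁.of_free c hc

lemma exists_comp_d₂_eq (h : IsResolution d₁ d₂ d₃) (hxyz : IsWeaklyRegular R [x, y, z])
    (hx : x ∈ LinearMap.range d₁) (hy : y ∈ LinearMap.range d₁) (hz : z ∈ LinearMap.range d₁)
    {c : F₂ →ₗ[R] M} (hc : c ∘ₗ d₃ = 0) : ∃ e : F₁ →ₗ[R] M, e ∘ₗ d₂ = c := by
  simp only [isWeaklyRegular_cons_iff, IsWeaklyRegular.nil, and_true] at hxyz
  obtain ⟨hxR, hyR, hzR⟩ := hxyz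
  have h₀ := annihilatesHomCohomology_zero_of_isSMulRegular (r := 1) hzR hz
  have h₁ := h.annihilatesHomCohomology_one hyR hy h₀
  have h₂ := h.annihilatesHomCohomology_two hxR hx h₁
  simpa only [one_smul] using h₂.of_free c hc

end Lift

variable [Module.Free R F₁] [Module.Finite R F₁] [Module.Free R F₂] [Module.Finite R F₂]
  [Module.Free R F₃] [Module.Finite R F₃]

/-- Multiplication by `r` is null-homotopic; the last homotopy `R → F₁` sends `1` to a preimage
of `r`. -/
theorem colon_colon_le (h : IsResolution d₁ d₂ d₃) (hxyz : IsWeaklyRegular R [x, y, z])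
    (hx : x ∈ LinearMap.range d₁) (hy : y ∈ LinearMap.range d₁) (hz : z ∈ LinearMap.range d₁) :
    (Ideal.span {x, y, z}).colon
      ((Ideal.span {x, y, z}).colon (LinearMap.range d₁ : Set R) : Set R) ≤
      LinearMap.range d₁ := by
  intro r hr
  have hd₁₂ (v) : d₁ (d₂ v) = 0 := LinearMap.congr_fun h.comp₁ v
  have hd₂₃ (v) : d₂ (d₃ v) = 0 := LinearMap.congr_fun h.comp₂ v
  obtain ⟨s₂, hs₂⟩ := h.exists_comp_d₃_eq_smul_id hxyz hx hy hz hr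
  replace hs₂ (v) : s₂ (d₃ v) = r • v := LinearMap.congr_fun hs₂ v
  obtain ⟨s₁, hs₁⟩ := h.exists_comp_d₂_eq hxyz hx hy hz (c := r • .id - d₃ ∘ₗ s₂)
    (by ext v; simp [hs₂])
  replace hs₁ (v) : s₁ (d₂ v) = r • v - d₃ (s₂ v) := LinearMap.congr_fun hs₁ v
  obtain ⟨s₀, hs₀⟩ := h.exists_comp_d₁_eq (isWeaklyRegular_triple_iff.mp hxyz).1 hx hy
    (c := r • .id - d₂ ∘ₗ s₁)
    (by ext v; simp [hs₁, hd₂₃])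
  replace hs₀ (v) : s₀ (d₁ v) = r • v - d₂ (s₁ v) := LinearMap.congr_fun hs₀ v
  have hxR : IsSMulRegular R x := (isWeaklyRegular_cons_iff R x _).mp hxyz |>.1
  obtain ⟨a, rfl⟩ := hx
  refine ⟨s₀ 1, hxR ?_⟩
  calc d₁ a • d₁ (s₀ 1) = d₁ (s₀ (d₁ a)) := by rw [← map_smul, ← map_smul, smul_eq_mul, mul_one]
    _ = d₁ a • r := by simp [hs₀, hd₁₂, mul_comm]

end IsResolution

end DoubleColon

section BasicDoubleLink

variable {R : Type*} [CommRing R]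

/-- The basic double link `(x, y) + wI` of `I`. -/
def basicDoubleLink (x y w : R) (I : Ideal R) : Ideal R :=
  Ideal.span {x, y} ⊔ Ideal.span {w} * I

theorem colon_colon_eq_sup_span_singleton_mul {𝔞 I : Ideal R} {z w : R}
    (hz : IsSMulRegular (R ⧸ 𝔞) z) (hw : IsSMulRegular (R ⧸ 𝔞) w)
    (hI : (Ideal.span {z} ⊔ 𝔞).colon ((Ideal.span {z} ⊔ 𝔞).colon (I : Set R) : Set R) ≤ I) :
    (Ideal.span {w * z} ⊔ 𝔞).colon ((Ideal.span {z} ⊔ 𝔞).colon (I : Set R) : Set R) =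
      𝔞 ⊔ Ideal.span {w} * I := by
  refine le_antisymm (fun r hr => ?_) (sup_le (fun a ha => ?_) fun b hb => ?_)
  · have hzJ : z ∈ (Ideal.span {z} ⊔ 𝔞).colon (I : Set R) := Submodule.mem_colon.mpr fun i _ =>
      Ideal.mul_mem_right _ _ (Ideal.mem_sup_left (Ideal.mem_span_singleton_self z))
    obtain ⟨s, a, ha, hrz⟩ := Ideal.mem_span_singleton_sup.mp (Submodule.mem_colon.mp hr z hzJ)
    have hrs : r - s * w ∈ 𝔞 := mem_of_isSMulRegular_quotient_of_smul_mem hz <| by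
      have : z • (r - s * w) = a := by simp only [smul_eq_mul] at hrz ⊢; linear_combination -hrz
      rwa [this]
    have hs : s ∈ I := hI <| Submodule.mem_colon.mpr fun j hj => by
      obtain ⟨t, a', ha', hrj⟩ := Ideal.mem_span_singleton_sup.mp (Submodule.mem_colon.mp hr j hj)
      have hst : s * j - t * z ∈ 𝔞 := mem_of_isSMulRegular_quotient_of_smul_mem hw <| by
        have : w • (s * j - t * z) = a' - (r - s * w) * j := by
          simp only [smul_eq_mul] at hrj ⊢; linear_combination -hrj
        rw [this]
        exact sub_mem ha' (Ideal.mul_mem_right _ _ hrs)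
      exact Ideal.mem_span_singleton_sup.mpr ⟨t, _, hst, add_sub_cancel _ _⟩
    have hr_eq : r = (r - s * w) + w * s := by ring
    rw [hr_eq]
    exact add_mem (Ideal.mem_sup_left hrs)
      (Ideal.mem_sup_right (Ideal.mul_mem_mul (Ideal.mem_span_singleton_self w) hs))
  · exact Submodule.mem_colon.mpr fun j _ => Ideal.mem_sup_right (Ideal.mul_mem_right _ _ ha)
  · obtain ⟨i, hi, rfl⟩ := Ideal.mem_span_singleton_mul.mp hb
    refine Submodule.mem_colon.mpr fun j hj => ?_
    obtain ⟨t, a, ha, hji⟩ := Ideal.mem_span_singleton_sup.mp (Submodule.mem_colon.mp hj i hi)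
    refine Ideal.mem_span_singleton_sup.mpr ⟨t, w * a, Ideal.mul_mem_left _ _ ha, ?_⟩
    simp only [smul_eq_mul] at hji ⊢
    linear_combination w * hji

namespace basicDoubleLink

lemma fst_mem {x y w : R} {I : Ideal R} : x ∈ basicDoubleLink x y w I :=
  Ideal.mem_sup_left (Ideal.subset_span (by simp))

lemma snd_mem {x y w : R} {I : Ideal R} : y ∈ basicDoubleLink x y w I :=
  Ideal.mem_sup_left (Ideal.subset_span (by simp))

lemma mul_mem_of_mem {x y w i : R} {I : Ideal R} (hi : i ∈ I) : w * i ∈ basicDoubleLink x y w I :=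
  Ideal.mem_sup_right (Ideal.mul_mem_mul (Ideal.mem_span_singleton_self w) hi)

variable {P F₂ F₃ : Type*} [AddCommGroup P] [Module R P] [AddCommGroup F₂] [Module R F₂]
  [AddCommGroup F₃] [Module R F₃]

/-- The generators `δ₁ (1, 0)`, `δ₁ b` and `w • δ₁ (0, v)` of the basic double link of the range of
`δ₁`. -/
def d₁ (δ₁ : R × P →ₗ[R] R) (b : R × P) (w : R) : R × R × P →ₗ[R] R :=
  (LinearMap.toSpanSingleton R R (δ₁ (1, 0))).coprod
    ((LinearMap.toSpanSingleton R R (δ₁ b)).coprod (w • δ₁ ∘ₗ LinearMap.inr R R P))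

/-- The relations between the generators `d₁`: those induced by `δ₂`, the one expressing `w • δ₁ b`
through the other generators, and the Koszul relation between the first two generators. -/
def d₂ (δ₁ : R × P →ₗ[R] R) (δ₂ : F₂ →ₗ[R] R × P) (b : R × P) (w : R) :
    F₂ × R × R →ₗ[R] R × R × P :=
  let ε : F₂ × R × R →ₗ[R] R × P :=
    δ₂.coprod ((LinearMap.toSpanSingleton R (R × P) (-b)).coprod 0)
  let t : F₂ × R × R →ₗ[R] R := LinearMap.fst R R R ∘ₗ LinearMap.snd R F₂ (R × R)
  let s : F₂ × R × R →ₗ[R] R := LinearMap.snd R R R ∘ₗ LinearMap.snd R F₂ (R × R)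
  (w • LinearMap.fst R R P ∘ₗ ε - δ₁ b • s).prod
    ((w • t + δ₁ (1, 0) • s).prod (LinearMap.snd R R P ∘ₗ ε))

/-- The second syzygies: those of `δ₁`, and one more coming from a lift `c` along `δ₂` of the Koszul
relation `δ₁ (1, 0) • b - δ₁ b • (1, 0)`. -/
def d₃ (δ₁ : R × P →ₗ[R] R) (δ₃ : F₃ →ₗ[R] F₂) (c : F₂) (w : R) : F₃ × R →ₗ[R] F₂ × R × R :=
  (δ₃.coprod (LinearMap.toSpanSingleton R F₂ c)).prod
    ((δ₁ (1, 0) • LinearMap.snd R F₃ R).prod (-w • LinearMap.snd R F₃ R))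

variable {δ₁ : R × P →ₗ[R] R} {δ₂ : F₂ →ₗ[R] R × P} {δ₃ : F₃ →ₗ[R] F₂} {b : R × P}
  {c : F₂} {w : R}

@[simp]
lemma d₁_apply (p q : R) (v : P) :
    d₁ δ₁ b w (p, q, v) = p * δ₁ (1, 0) + (q * δ₁ b + w * δ₁ (0, v)) := rfl

@[simp]
lemma d₂_apply (g : F₂) (t s : R) :
    d₂ δ₁ δ₂ b w (g, t, s) = (w * (δ₂ g - t • b).1 - δ₁ b * s, w * t + δ₁ (1, 0) * s,
      (δ₂ g - t • b).2) := by
  simp [d₂, sub_eq_add_neg]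

@[simp]
lemma d₃_apply (h : F₃) (t : R) :
    d₃ δ₁ δ₃ c w (h, t) = (δ₃ h + t • c, δ₁ (1, 0) * t, -w * t) := rfl

lemma apply_eq_fst_mul_add (v : R × P) : δ₁ v = v.1 * δ₁ (1, 0) + δ₁ (0, v.2) := by
  rw [← smul_eq_mul, ← map_smul, ← map_add]
  simp

theorem range_d₁ :
    LinearMap.range (d₁ δ₁ b w) = basicDoubleLink (δ₁ (1, 0)) (δ₁ b) w (LinearMap.range δ₁) := by
  refine le_antisymm ?_ (sup_le ?_ fun r hr => ?_)
  · rintro _ ⟨⟨p, q, v⟩, rfl⟩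
    rw [d₁_apply, ← add_assoc]
    exact Submodule.add_mem_sup (Ideal.mem_span_pair.mpr ⟨p, q, rfl⟩)
      (Ideal.mul_mem_mul (Ideal.mem_span_singleton_self w) ⟨_, rfl⟩)
  · refine Ideal.span_le.mpr ?_
    rintro _ (rfl | rfl)
    · exact ⟨(1, 0, 0), by rw [d₁_apply, ← Prod.zero_eq_mk, map_zero]; ring⟩
    · exact ⟨(0, 1, 0), by rw [d₁_apply, ← Prod.zero_eq_mk, map_zero]; ring⟩
  · obtain ⟨_, ⟨v, rfl⟩, rfl⟩ := Ideal.mem_span_singleton_mul.mp hr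
    refine ⟨(w * v.1, 0, v.2), ?_⟩
    rw [d₁_apply, apply_eq_fst_mul_add v]
    ring

lemma fst_mul_add_of_apply_sub_smul (h : Function.Exact δ₂ δ₁) (g : F₂) (t : R) :
    (δ₂ g - t • b).1 * δ₁ (1, 0) + δ₁ (0, (δ₂ g - t • b).2) = -t * δ₁ b := by
  rw [← apply_eq_fst_mul_add, map_sub, h.apply_apply_eq_zero, map_smul, smul_eq_mul]
  ring

theorem exact_d₂_d₁ (h : Function.Exact δ₂ δ₁) (hxy : IsWeaklyRegular R [δ₁ (1, 0), δ₁ b])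
    (hw : IsSMulRegular (R ⧸ Ideal.span {δ₁ (1, 0), δ₁ b}) w) :
    Function.Exact (d₂ δ₁ δ₂ b w) (d₁ δ₁ b w) := by
  rintro ⟨p, q, v⟩
  constructor
  · intro hpqv
    rw [d₁_apply] at hpqv
    obtain ⟨α, β, hv⟩ : ∃ α β, α * δ₁ (1, 0) + β * δ₁ b = δ₁ (0, v) :=
      Ideal.mem_span_pair.mp <| mem_of_isSMulRegular_quotient_of_smul_mem hw <|
        Ideal.mem_span_pair.mpr ⟨-p, -q, by rw [smul_eq_mul]; linear_combination -hpqv⟩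
    obtain ⟨s, hp, hq⟩ := exists_eq_mul_of_mul_add_mul_eq_zero hxy (p := p + w * α)
      (q := q + w * β) (by linear_combination hpqv + w * hv)
    obtain ⟨g, hg⟩ := (h ((-α, v) - β • b)).mp <| by
      rw [map_sub, map_smul, apply_eq_fst_mul_add, smul_eq_mul]
      linear_combination -hv
    refine ⟨(g, -β, s), ?_⟩
    rw [d₂_apply, hg, neg_smul, sub_neg_eq_add, sub_add_cancel]
    exact Prod.ext (by linear_combination -hp) (Prod.ext (by linear_combination -hq) rfl)
  · rintro ⟨⟨g, t, s⟩, hgts⟩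
    rw [← hgts, d₂_apply, d₁_apply]
    linear_combination w * fst_mul_add_of_apply_sub_smul (b := b) h g t

theorem exact_d₃_d₂ (h : IsResolution δ₁ δ₂ δ₃) (hxy : IsWeaklyRegular R [δ₁ (1, 0), δ₁ b])
    (hc : δ₂ c = δ₁ (1, 0) • b - δ₁ b • (1, 0)) :
    Function.Exact (d₃ δ₁ δ₃ c w) (d₂ δ₁ δ₂ b w) := by
  rintro ⟨g, t, s⟩
  constructor
  · intro hgts
    simp only [d₂_apply, Prod.mk_eq_zero] at hgts
    obtain ⟨-, hts, hε₂⟩ := hgts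
    have hε := fst_mul_add_of_apply_sub_smul (b := b) h.exact₁ g t
    rw [hε₂, ← Prod.zero_eq_mk, map_zero, add_zero] at hε
    obtain ⟨r, hε₁, rfl⟩ := exists_eq_mul_of_mul_add_mul_eq_zero hxy (p := (δ₂ g - t • b).1)
      (q := t) (by linear_combination hε)
    have hx : IsSMulRegular R (δ₁ (1, 0)) := ((isWeaklyRegular_cons_iff R _ _).mp hxy).1
    have hs : s = -w * r := hx (by simp only [smul_eq_mul]; linear_combination hts)
    have hg : δ₂ (g - r • c) = 0 := by
      have : δ₂ g - (δ₁ (1, 0) * r) • b = (-δ₁ b * r) • (1, 0) := by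
        exact Prod.ext (by simpa using hε₁) (by simpa using hε₂)
      rw [map_sub, map_smul, hc, sub_eq_iff_eq_add.mp this]
      module
    obtain ⟨f, hf⟩ := (h.exact₂ _).mp hg
    exact ⟨(f, r), by rw [d₃_apply, hf, sub_add_cancel, hs]⟩
  · rintro ⟨⟨f, r⟩, hfr⟩
    have hε : δ₂ (δ₃ f + r • c) - (δ₁ (1, 0) * r) • b = (-r * δ₁ b) • (1, 0) := by
      rw [map_add, map_smul, h.exact₂.apply_apply_eq_zero, hc]
      module
    rw [← hfr, d₃_apply, d₂_apply, hε]
    ext <;> simp <;> ring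

theorem injective_d₃ (h : Function.Injective δ₃) (hx : IsSMulRegular R (δ₁ (1, 0))) :
    Function.Injective (d₃ δ₁ δ₃ c w) := by
  refine (injective_iff_map_eq_zero _).mpr ?_
  rintro ⟨f, r⟩ hfr
  simp only [d₃_apply, Prod.mk_eq_zero] at hfr
  obtain ⟨hf, hr, -⟩ := hfr
  obtain rfl : r = 0 := hx.right_eq_zero_of_smul hr
  rw [zero_smul, add_zero] at hf
  rw [(map_eq_zero_iff δ₃ h).mp hf, Prod.zero_eq_mk]

theorem isMinimalResolution {𝔪 : Ideal R} (h : IsMinimalResolution 𝔪 δ₁ δ₂ δ₃)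
    (hxy : IsWeaklyRegular R [δ₁ (1, 0), δ₁ b])
    (hw : IsSMulRegular (R ⧸ Ideal.span {δ₁ (1, 0), δ₁ b}) w)
    (hc : δ₂ c = δ₁ (1, 0) • b - δ₁ b • (1, 0)) (hw𝔪 : w ∈ 𝔪)
    (hb𝔪 : b ∈ 𝔪 • (⊤ : Submodule R (R × P))) (hc𝔪 : c ∈ 𝔪 • (⊤ : Submodule R F₂)) :
    IsMinimalResolution 𝔪 (d₁ δ₁ b w) (d₂ δ₁ δ₂ b w) (d₃ δ₁ δ₃ c w) where
  exact₁ := exact_d₂_d₁ h.exact₁ hxy hw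
  exact₂ := exact_d₃_d₂ h.toIsResolution hxy hc
  injective := injective_d₃ h.injective ((isWeaklyRegular_cons_iff R _ _).mp hxy).1
  apply_mem₁ := by
    rintro ⟨p, q, v⟩
    rw [d₁_apply]
    exact add_mem (Ideal.mul_mem_left _ _ (h.apply_mem₁ _)) <|
      add_mem (Ideal.mul_mem_left _ _ (h.apply_mem₁ _)) (Ideal.mul_mem_right _ _ hw𝔪)
  apply_mem₂ := by
    rintro ⟨g, t, s⟩
    rw [d₂_apply]
    have hε : δ₂ g - t • b ∈ 𝔪 • (⊤ : Submodule R (R × P)) :=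
      sub_mem (h.apply_mem₂ g) (Submodule.smul_mem _ t hb𝔪)
    refine prodMk_mem_smul_top (mem_smul_top_self ?_) (prodMk_mem_smul_top (mem_smul_top_self ?_)
      (map_mem_smul_top (LinearMap.snd R R P) hε))
    · exact sub_mem (Ideal.mul_mem_right _ _ hw𝔪) (Ideal.mul_mem_right _ _ (h.apply_mem₁ b))
    · exact add_mem (Ideal.mul_mem_right _ _ hw𝔪) (Ideal.mul_mem_right _ _ (h.apply_mem₁ _))
  apply_mem₃ := by
    rintro ⟨f, t⟩
    rw [d₃_apply]
    refine prodMk_mem_smul_top (add_mem (h.apply_mem₃ f) (Submodule.smul_mem _ t hc𝔪))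
      (prodMk_mem_smul_top (mem_smul_top_self ?_) (mem_smul_top_self ?_))
    · exact Ideal.mul_mem_right _ _ (h.apply_mem₁ _)
    · exact Ideal.mul_mem_right _ _ (neg_mem hw𝔪)

end basicDoubleLink

end BasicDoubleLink

section Format

variable {R : Type*} [CommRing R] [IsLocalRing R] {I : Ideal R} {m n : ℕ}

lemma hasResolutionFormat_iff : HasResolutionFormat I m n ↔
    ∃ (d₁ : (Fin m → R) →ₗ[R] R) (d₂ : (Fin (m + n - 1) → R) →ₗ[R] (Fin m → R))
      (d₃ : (Fin n → R) →ₗ[R] (Fin (m + n - 1) → R)),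
      IsMinimalResolution (maximalIdeal R) d₁ d₂ d₃ ∧ LinearMap.range d₁ = I := by
  constructor
  · rintro ⟨d₁, d₂, d₃, hI, h₁, h₂, h₃, hmin₁, hmin₂, hmin₃⟩
    refine ⟨d₁, d₂, d₃, ⟨⟨?_, ?_, ?_⟩, ?_, ?_, ?_⟩, hI⟩
    · exact LinearMap.exact_iff.mpr h₁.symm
    · exact LinearMap.exact_iff.mpr h₂.symm
    · exact LinearMap.ker_eq_bot.mp h₃
    · exact fun v => hmin₁ (hI ▸ LinearMap.mem_range_self d₁ v)
    · exact fun v => hmin₂ (LinearMap.mem_range_self d₂ v)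
    · exact fun v => hmin₃ (LinearMap.mem_range_self d₃ v)
  · rintro ⟨d₁, d₂, d₃, h, rfl⟩
    refine ⟨d₁, d₂, d₃, rfl, ?_, ?_, ?_, ?_, ?_, ?_⟩
    · exact (LinearMap.exact_iff.mp h.exact₁).symm
    · exact (LinearMap.exact_iff.mp h.exact₂).symm
    · exact LinearMap.ker_eq_bot.mpr h.injective
    · exact LinearMap.range_le_iff_comap.mpr (Submodule.eq_top_iff'.mpr h.apply_mem₁)
    · exact LinearMap.range_le_iff_comap.mpr (Submodule.eq_top_iff'.mpr h.apply_mem₂)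
    · exact LinearMap.range_le_iff_comap.mpr (Submodule.eq_top_iff'.mpr h.apply_mem₃)

lemma HasResolutionFormat.le_maximalIdeal (h : HasResolutionFormat I m n) :
    I ≤ maximalIdeal R := by
  obtain ⟨d₁, d₂, d₃, hres, rfl⟩ := hasResolutionFormat_iff.mp h
  exact LinearMap.range_le_iff_comap.mpr (Submodule.eq_top_iff'.mpr hres.apply_mem₁)

lemma HasResolutionFormat.colon_colon_le (h : HasResolutionFormat I m n) {x y z : R}
    (hx : x ∈ I) (hy : y ∈ I) (hz : z ∈ I) (hreg : IsWeaklyRegular R [x, y, z]) :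
    (Ideal.span {x, y, z}).colon ((Ideal.span {x, y, z}).colon (I : Set R) : Set R) ≤ I := by
  obtain ⟨d₁, d₂, d₃, hres, rfl⟩ := hasResolutionFormat_iff.mp h
  exact hres.toIsResolution.colon_colon_le hreg hx hy hz

theorem IsMinimalResolution.hasResolutionFormat {F₁ F₂ F₃ : Type*} [AddCommGroup F₁]
    [Module R F₁] [AddCommGroup F₂] [Module R F₂] [AddCommGroup F₃] [Module R F₃]
    [Module.Free R F₁] [Module.Finite R F₁] [Module.Free R F₂] [Module.Finite R F₂]
    [Module.Free R F₃] [Module.Finite R F₃] {d₁ : F₁ →ₗ[R] R} {d₂ : F₂ →ₗ[R] F₁}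
    {d₃ : F₃ →ₗ[R] F₂}
    (h : IsMinimalResolution (maximalIdeal R) d₁ d₂ d₃) (h₁ : Module.finrank R F₁ = m)
    (h₂ : Module.finrank R F₂ = m + n - 1) (h₃ : Module.finrank R F₃ = n) :
    HasResolutionFormat (LinearMap.range d₁) m n := by
  let e₁ : F₁ ≃ₗ[R] (Fin m → R) := .ofFinrankEq _ _ (by simp [h₁])
  let e₂ : F₂ ≃ₗ[R] (Fin (m + n - 1) → R) := .ofFinrankEq _ _ (by simp [h₂])
  let e₃ : F₃ ≃ₗ[R] (Fin n → R) := .ofFinrankEq _ _ (by simp [h₃])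
  exact hasResolutionFormat_iff.mpr ⟨_, _, _, h.congr e₁ e₂ e₃, LinearEquiv.range_comp _ _⟩

end Format

section Splitting

variable {R : Type*} [CommRing R] {F : Type*} [AddCommGroup F] [Module R F]

lemma exists_linearMap_apply_eq_one [IsLocalRing R] [Module.Free R F]
    {a : F} (ha : a ∉ maximalIdeal R • (⊤ : Submodule R F)) : ∃ l : F →ₗ[R] R, l a = 1 := by
  let B := Module.Free.chooseBasis R F
  obtain ⟨i, hi⟩ : ∃ i, B.repr a i ∉ maximalIdeal R := by
    contrapose! ha
    rw [← B.linearCombination_repr a]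
    exact Submodule.sum_mem _ fun i _ => Submodule.smul_mem_smul (ha i) trivial
  obtain ⟨u, hu⟩ := notMem_maximalIdeal.mp hi
  exact ⟨(↑u⁻¹ : R) • B.coord i, by simp [← hu]⟩

lemma exists_linearEquiv_prod_ker {a : F} {l : F →ₗ[R] R} (hl : l a = 1) :
    ∃ e : F ≃ₗ[R] R × LinearMap.ker l, e a = (1, 0) := by
  let π : F →ₗ[R] LinearMap.ker l := (LinearMap.id - l.smulRight a).codRestrict _
    fun v => by simp [hl]
  have hπ (v : F) : (π v : F) = v - l v • a := rfl
  let ι : R × LinearMap.ker l →ₗ[R] F :=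
    (LinearMap.toSpanSingleton R F a).coprod (LinearMap.ker l).subtype
  have hι (p : R × LinearMap.ker l) : ι p = p.1 • a + p.2 := rfl
  have hlι (p : R × LinearMap.ker l) : l (ι p) = p.1 := by simp [hι, hl]
  have hπι (p : R × LinearMap.ker l) : π (ι p) = p.2 := Subtype.ext <| by
    rw [hπ, hlι, hι, add_sub_cancel_left]
  have hιπ (v : F) : ι (l v, π v) = v := by simp [hι, hπ]
  have hπa : π a = 0 := Subtype.ext (by rw [hπ, hl, one_smul, sub_self, Submodule.coe_zero])
  exact ⟨.ofLinearMap (l.prod π) ι (LinearMap.ext fun p => Prod.ext (hlι p) (hπι p))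
    (LinearMap.ext hιπ), Prod.ext hl hπa⟩

lemma free_right_of_linearEquiv_prod [IsLocalRing R] [Module.Free R F] [Module.Finite R F]
    {P Q : Type*} [AddCommGroup P] [Module R P] [AddCommGroup Q] [Module R Q]
    (e : F ≃ₗ[R] Q × P) : Module.Finite R P ∧ Module.Free R P := by
  let π : F →ₗ[R] P := LinearMap.snd R Q P ∘ₗ e.toLinearMap
  have hfin : Module.Finite R P :=
    .of_surjective π (Prod.snd_surjective.comp e.surjective)
  have hproj : Module.Projective R P :=
    .of_split (e.symm.toLinearMap ∘ₗ LinearMap.inr R Q P) π (by ext; simp [π])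
  exact ⟨hfin, Module.free_of_flat_of_isLocalRing⟩

end Splitting

section Linkage

universe u

variable {R : Type u} [CommRing R] [IsLocalRing R] {I : Ideal R} {m n : ℕ}

theorem HasResolutionFormat.exists_splitting (h : HasResolutionFormat I m n) {x : R}
    (hx : x ∈ I) (hx' : x ∉ maximalIdeal R • I) :
    ∃ (P : Type u) (_ : AddCommGroup P) (_ : Module R P) (_ : Module.Free R P)
      (_ : Module.Finite R P) (d₁ : R × P →ₗ[R] R)
      (d₂ : (Fin (m + n - 1) → R) →ₗ[R] R × P) (d₃ : (Fin n → R) →ₗ[R] (Fin (m + n - 1) → R)),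
      IsMinimalResolution (maximalIdeal R) d₁ d₂ d₃ ∧ Module.finrank R P + 1 = m ∧
        LinearMap.range d₁ = I ∧ d₁ (1, 0) = x := by
  obtain ⟨d₁, d₂, d₃, hres, rfl⟩ := hasResolutionFormat_iff.mp h
  obtain ⟨a, rfl⟩ := hx
  have ha : a ∉ maximalIdeal R • (⊤ : Submodule R (Fin m → R)) := fun ha => hx' <| by
    simpa only [Submodule.map_smul'', Submodule.map_top] using Submodule.mem_map_of_mem (f := d₁) ha
  obtain ⟨l, hl⟩ := exists_linearMap_apply_eq_one ha
  obtain ⟨e, he⟩ := exists_linearEquiv_prod_ker hl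
  obtain ⟨hfin, hfree⟩ := free_right_of_linearEquiv_prod e
  refine ⟨LinearMap.ker l, inferInstance, inferInstance, hfree, hfin, _, _, _,
    hres.congr e (.refl R _) (.refl R _), ?_, LinearEquiv.range_comp _ _, ?_⟩
  · have := e.finrank_eq
    rw [Module.finrank_prod, Module.finrank_self, Module.finrank_fin_fun] at this
    omega
  · simp [← he]

theorem hasResolutionFormat_basicDoubleLink (h : HasResolutionFormat I m n) {x y w : R}
    (hx : x ∈ I) (hx' : x ∉ maximalIdeal R • I) (hy : y ∈ maximalIdeal R • I)
    (hw : w ∈ maximalIdeal R) (hxy : IsWeaklyRegular R [x, y])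
    (hreg : IsSMulRegular (R ⧸ Ideal.span {x, y}) w) :
    HasResolutionFormat (basicDoubleLink x y w I) (m + 1) (n + 1) := by
  obtain ⟨P, _, _, _, _, d₁, d₂, d₃, hres, hP, rfl, rfl⟩ := h.exists_splitting hx hx'
  obtain ⟨b, hb, rfl⟩ : ∃ b ∈ maximalIdeal R • (⊤ : Submodule R (R × P)), d₁ b = y := by
    rwa [← Submodule.map_top, ← Submodule.map_smul''] at hy
  obtain ⟨s₁, -, hs, -, -⟩ := hres.exists_homotopy (1, 0)
  have hc : d₂ (s₁ b) = d₁ (1, 0) • b - d₁ b • (1, 0) :=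
    eq_sub_of_add_eq' (LinearMap.congr_fun hs b)
  have hres' := basicDoubleLink.isMinimalResolution hres hxy hreg hc hw hb (map_mem_smul_top s₁ hb)
  rw [← basicDoubleLink.range_d₁]
  refine hres'.hasResolutionFormat ?_ ?_ ?_ <;>
    simp only [Module.finrank_prod, Module.finrank_self, Module.finrank_fin_fun] <;> omega

theorem HasResolutionFormat.linked_basicDoubleLink (h : HasResolutionFormat I m n) {x y z : R}
    (hx : x ∈ I) (hy : y ∈ I) (hz : z ∈ I) (hreg : IsRegular R [x, y, z]) :
    Linked I (basicDoubleLink x y z I) := by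
  let J : Ideal R := (Ideal.span {x, y, z}).colon (I : Set R)
  have hle : Ideal.span {x, y, z} ≤ J := Ideal.le_colon
  have hIJ : DirectlyLinked I J := ⟨x, y, z, hx, hy, hz, hreg, rfl⟩
  have hJ : basicDoubleLink x y z I = (Ideal.span {x, y, z * z}).colon (J : Set R) := by
    have hzreg := (isWeaklyRegular_triple_iff.mp hreg.toIsWeaklyRegular).2
    have hcolon := h.colon_colon_le hx hy hz hreg.toIsWeaklyRegular
    simp only [J, span_triple_eq] at hcolon ⊢
    exact (colon_colon_eq_sup_span_singleton_mul hzreg hzreg hcolon).symm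
  refine (Relation.ReflTransGen.single hIJ).tail
    ⟨x, y, z * z, hle ?_, hle ?_, Ideal.mul_mem_left _ _ (hle ?_),
      isRegular_triple_mul_self hreg, hJ⟩ <;>
    exact Ideal.subset_span (by simp)

end Linkage

theorem stmt_4_general (Q : Type*) [CommRing Q] [IsNoetherianRing Q] [IsLocalRing Q]
    (I : Ideal Q) (m n : ℕ) (hI : IsGrade3PerfectOfFormat I m n) :
    ∃ J : Ideal Q, IsGrade3PerfectOfFormat J (m + 1) (n + 1) ∧ Linked I J := by
  obtain ⟨⟨a, b, c, ha, hb, hc, habc⟩, hm, hn, hF⟩ := hI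
  have hI𝔪 := hF.le_maximalIdeal
  obtain ⟨x, hx, y, hy, z, hz, hx', hreg⟩ :=
    exists_isRegular_notMem_smul hI𝔪 ha hb hc habc.toIsWeaklyRegular
  obtain ⟨hxy, hzreg⟩ := isWeaklyRegular_triple_iff.mp hreg.toIsWeaklyRegular
  have hregJ : ∃ x' y' z' : Q, x' ∈ basicDoubleLink x y z I ∧ y' ∈ basicDoubleLink x y z I ∧
      z' ∈ basicDoubleLink x y z I ∧ IsRegular Q [x', y', z'] :=
    ⟨x, y, z * z, basicDoubleLink.fst_mem, basicDoubleLink.snd_mem,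
      basicDoubleLink.mul_mem_of_mem hz, isRegular_triple_mul_self hreg⟩
  have hformat : HasResolutionFormat (basicDoubleLink x y z I) (m + 1) (n + 1) :=
    hasResolutionFormat_basicDoubleLink hF hx hx' hy (hI𝔪 hz) hxy hzreg
  exact ⟨basicDoubleLink x y z I, ⟨hregJ, by omega, by omega, hformat⟩,
    hF.linked_basicDoubleLink hx (Submodule.smul_le_right hy) hz hreg⟩

/-- **Corollary 1.3(a).** Let `Q` be a commutative Noetherian local ring and `I ⊆ Q` a
grade `3` perfect ideal of resolution format `(1, m, m+n-1, n)`.  If `m ≥ 4`, then there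
exists a grade `3` perfect ideal of resolution format `(1, m+1, m+n+1, n+1)` that is
linked to `I`. -/
theorem stmt_4 (Q : Type*) [CommRing Q] [IsNoetherianRing Q] [IsLocalRing Q]
    (I : Ideal Q) (m n : ℕ) (hI : IsGrade3PerfectOfFormat I m n) (hm : 4 ≤ m) :
    ∃ J : Ideal Q, IsGrade3PerfectOfFormat J (m + 1) (n + 1) ∧ Linked I J :=
  stmt_4_general Q I m n hI
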